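/- (Inverse construction of the Csaki–Vincze transform.) Let X̄ : {1,2,3,…} → {−1,1} be a sign sequence with walk S̄_0 = 0, S̄_n = X̄_1 + ⋯ + X̄_n, and assume sup_n S̄_n = +∞, so that σ_l := min{n ≥ 0 : S̄_n = 2l} is finite for every l ≥ 1; set σ_0 = 0. Let ε ∈ {−1,1} and define X_1 = ε and, for j ≥ 1, X_{j+1} = Σ_{l≥0} (−1)^{l+1}·ε·X̄_j·1{σ_l + 1 ≤ j ≤ σ_{l+1}}, with S the walk of X. Then the set {i ≥ 1 : S_{i−1}·S_{i+1} < 0} is infinite, the crossing times τ_l of S (defined by τ_0 = 0, τ_{l+1} = min{i > τ_l : S_{i−1}·S_{i+1} < 0}) coincide with the σ_l, and T(S) = S̄; in particular |Ȳ_n − |S_n|| ≤ 2 for all n, where Ȳ_n = max_{0≤k≤n} S̄_k − S̄_n. -/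

import Mathlib

noncomputable section

/-- The walk `S` associated with the sign sequence `X : {1,2,…} → {−1,1}`:
`S 0 = 0`, `S n = X 1 + ⋯ + X n`. -/
def cvWalk (X : ℕ → ℤ) (n : ℕ) : ℤ := ∑ j ∈ Finset.Icc 1 n, X j

/-- The crossing times of `S`: `τ 0 = 0` and
`τ (l+1) = min {i > τ l : S (i-1) * S (i+1) < 0}`. -/
def cvTau (X : ℕ → ℤ) : ℕ → ℕ
  | 0 => 0
  | l + 1 => sInf {i : ℕ | cvTau X l < i ∧ cvWalk X (i - 1) * cvWalk X (i + 1) < 0}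

/-- The increments of the Csaki–Vincze transform `S̄ = T(S)`:
`X̄ j = Σ_{l ≥ 0} (−1)^(l+1) · X 1 · X (j+1) · 1_{τ l + 1 ≤ j ≤ τ (l+1)}`
(the sum may be truncated to `l ≤ j` since `l ≤ τ l` whenever `τ l + 1 ≤ j`). -/
def cvXbar (X : ℕ → ℤ) (j : ℕ) : ℤ :=
  ∑ l ∈ Finset.range (j + 1),
    (-1 : ℤ) ^ (l + 1) * X 1 * X (j + 1) *
      (if cvTau X l + 1 ≤ j ∧ j ≤ cvTau X (l + 1) then 1 else 0)

/-- The Csaki–Vincze transform `S̄ = T(S)`. -/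
def cvSbar (X : ℕ → ℤ) (n : ℕ) : ℤ := ∑ j ∈ Finset.Icc 1 n, cvXbar X j

/-- `Ȳ`-type process of a walk `f`: `max_{0 ≤ k ≤ n} f k − f n`. -/
def cvYof (f : ℕ → ℤ) (n : ℕ) : ℤ :=
  (Finset.range (n + 1)).sup' Finset.nonempty_range_add_one f - f n

/-- `Ȳ n = max_{0 ≤ k ≤ n} S̄ k − S̄ n`. -/
def cvYbar (X : ℕ → ℤ) (n : ℕ) : ℤ := cvYof (cvSbar X) n

theorem cvWalk_succ' (X : ℕ → ℤ) (n : ℕ) : cvWalk X (n + 1) = cvWalk X n + X (n + 1) := by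
  unfold cvWalk
  rw [Finset.sum_Icc_succ_top (by omega)]

theorem cvWalk_zero' (X : ℕ → ℤ) : cvWalk X 0 = 0 := by simp [cvWalk]

theorem cv_sigma_aux (Xb : ℕ → ℤ) (hXb : ∀ j, 1 ≤ j → Xb j = 1 ∨ Xb j = -1)
    (hsup : ∀ M : ℤ, ∃ n : ℕ, M ≤ cvWalk Xb n)
    (σ : ℕ → ℕ) (hσ : ∀ l : ℕ, σ l = sInf {n : ℕ | cvWalk Xb n = 2 * l}) (l : ℕ) :
    cvWalk Xb (σ l) = 2 * l ∧ ∀ n, n < σ l → cvWalk Xb n < 2 * l := by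
  classical
  have hex := hsup (2 * l)
  have h1 := Nat.find_spec hex
  have h2 : ∀ n, n < Nat.find hex → cvWalk Xb n < 2 * l := fun n hn => by
    have := Nat.find_min hex hn
    omega
  generalize Nat.find hex = m at h1 h2
  have h3 : cvWalk Xb m = 2 * l := by
    rcases m with _ | m
    · rw [cvWalk_zero'] at *
      omega
    · have := h2 m (by omega)
      rw [cvWalk_succ'] at *
      have := hXb (m + 1) (by omega)
      omega
  have h4 : σ l = m := by
    rw [hσ]
    apply le_antisymm
    · exact Nat.sInf_le h3
    · by_contra hlt
      push Not at hlt
      have h5 : cvWalk Xb (sInf {n : ℕ | cvWalk Xb n = 2 * l}) = 2 * l :=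
        Nat.sInf_mem (s := {n : ℕ | cvWalk Xb n = 2 * l}) ⟨m, h3⟩
      have := h2 _ hlt
      omega
  rw [h4]
  exact ⟨h3, h2⟩

theorem cv_sum_single (σ : ℕ → ℕ) (hm : StrictMono σ) (c : ℕ → ℤ) (j l : ℕ)
    (h1 : σ l + 1 ≤ j) (h2 : j ≤ σ (l + 1)) :
    ∑ k ∈ Finset.range (j + 1), c k * (if σ k + 1 ≤ j ∧ j ≤ σ (k + 1) then 1 else 0) = c l := by
  rw [Finset.sum_eq_single l]
  · simp [h1, h2]
  · intro k _ hk
    rw [if_neg, mul_zero]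
    rintro ⟨h3, h4⟩
    rcases lt_or_gt_of_ne hk with h | h
    · have := hm.monotone (show k + 1 ≤ l from h)
      omega
    · have := hm.monotone (show l + 1 ≤ k from h)
      omega
  · intro h
    have := hm.le_apply (x := l)
    simp at h
    omega

theorem cv_locate (σ : ℕ → ℕ) (hm : StrictMono σ) (h0 : σ 0 = 0) (n : ℕ) :
    ∃ l, σ l ≤ n ∧ n < σ (l + 1) := by
  induction n with
  | zero => exact ⟨0, by omega, by have := hm (show 0 < 0 + 1 by omega); omega⟩
  | succ n ih =>
    obtain ⟨l, h1, h2⟩ := ih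
    by_cases h : n + 1 < σ (l + 1)
    · exact ⟨l, by omega, h⟩
    · exact ⟨l + 1, by omega, by have := hm (show l + 1 < l + 1 + 1 by omega); omega⟩

/-- **Inverse construction of the Csaki–Vincze transform.** Let `X̄` be a sign sequence
whose walk `S̄` satisfies `sup_n S̄ n = +∞`, let `σ l = min {n ≥ 0 : S̄ n = 2l}`
(`σ 0 = 0`), let `ε ∈ {−1,1}` and let `X` be given by `X 1 = ε` and
`X (j+1) = Σ_{l ≥ 0} (−1)^(l+1) · ε · X̄ j · 1_{σ l + 1 ≤ j ≤ σ (l+1)}`, with walk `S`.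
Then `S` has infinitely many crossings, its crossing times `τ l` coincide with the `σ l`,
and `T(S) = S̄`; in particular `|Ȳ n − |S n|| ≤ 2` for all `n`, where
`Ȳ n = max_{k ≤ n} S̄ k − S̄ n`. -/
theorem cv_inverse_construction (Xb : ℕ → ℤ) (hXb : ∀ j, 1 ≤ j → Xb j = 1 ∨ Xb j = -1)
    (hsup : ∀ M : ℤ, ∃ n : ℕ, M ≤ cvWalk Xb n)
    (σ : ℕ → ℕ) (hσ : ∀ l : ℕ, σ l = sInf {n : ℕ | cvWalk Xb n = 2 * l})
    (ε : ℤ) (hε : ε = 1 ∨ ε = -1)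
    (X : ℕ → ℤ) (hX1 : X 1 = ε)
    (hX : ∀ j, 1 ≤ j →
      X (j + 1) = ∑ l ∈ Finset.range (j + 1),
        (-1 : ℤ) ^ (l + 1) * ε * Xb j * (if σ l + 1 ≤ j ∧ j ≤ σ (l + 1) then 1 else 0)) :
    {i : ℕ | 1 ≤ i ∧ cvWalk X (i - 1) * cvWalk X (i + 1) < 0}.Infinite ∧
    (∀ l, cvTau X l = σ l) ∧
    (∀ n, cvSbar X n = cvWalk Xb n) ∧
    (∀ n, abs (cvYof (cvWalk Xb) n - abs (cvWalk X n)) ≤ 2) := by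
  have hA := cv_sigma_aux Xb hXb hsup σ hσ
  have hm : StrictMono σ := by
    apply strictMono_nat_of_lt_succ
    intro l
    by_contra h
    push Not at h
    have h1 := (hA l).1
    have h2 := (hA (l + 1)).1
    push_cast at h2
    rcases h.lt_or_eq with h | h
    · have := (hA l).2 _ h
      omega
    · rw [h] at h2
      omega
  have h0 : σ 0 = 0 := by
    rw [hσ]
    apply Nat.eq_zero_of_le_zero
    apply Nat.sInf_le
    simp [cvWalk_zero']
  have hloc := cv_locate σ hm h0
  have hstep : ∀ l j, σ l + 1 ≤ j → j ≤ σ (l + 1) → X (j + 1) = (-1 : ℤ) ^ (l + 1) * ε * Xb j := by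
    intro l j h1 h2
    rw [hX j (by omega)]
    exact cv_sum_single σ hm (fun l => (-1 : ℤ) ^ (l + 1) * ε * Xb j) j l h1 h2
  have hε2 : ε * ε = 1 := by rcases hε with h | h <;> simp [h]
  have hs2 : ∀ l : ℕ, (ε * (-1) ^ l) * (ε * (-1) ^ l) = 1 := by
    intro l
    rcases neg_one_pow_eq_or ℤ l with h | h <;> rw [h] <;> linarith
  -- walk within a block, from its start value
  have hblk : ∀ l, cvWalk X (σ l + 1) = ε * (-1) ^ l →
      ∀ n, σ l ≤ n → n ≤ σ (l + 1) →
        cvWalk X (n + 1) = ε * (-1) ^ l * (2 * l + 1 - cvWalk Xb n) := by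
    intro l hl n hn
    induction n, hn using Nat.le_induction with
    | base =>
      intro _
      rw [hl, (hA l).1]
      ring
    | succ n hn ih =>
      intro hn2
      rw [cvWalk_succ' X (n + 1), ih (by omega), hstep l (n + 1) (by omega) hn2, cvWalk_succ' Xb n]
      ring
  have hstart : ∀ l, cvWalk X (σ l + 1) = ε * (-1) ^ l := by
    intro l
    induction l with
    | zero => simp [h0, cvWalk, hX1]
    | succ l ih =>
      rw [hblk l ih (σ (l + 1)) (hm (Nat.lt_succ_self l)).le le_rfl, (hA (l + 1)).1]
      push_cast
      ring
  have hS : ∀ l n, σ l ≤ n → n ≤ σ (l + 1) →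
        cvWalk X (n + 1) = ε * (-1) ^ l * (2 * l + 1 - cvWalk Xb n) :=
    fun l => hblk l (hstart l)
  have hle : ∀ l n, n < σ (l + 1) → cvWalk Xb n ≤ 2 * l + 1 := by
    intro l n h
    have := (hA (l + 1)).2 n h
    push_cast at this
    omega
  -- one step before the first passage time
  have hpre : ∀ l i, σ (l + 1) = i + 1 → cvWalk Xb i = 2 * l + 1 := by
    intro l i h
    have h1 := (hA (l + 1)).1
    have h2 := (hA (l + 1)).2 i (by omega)
    rw [h, cvWalk_succ'] at h1
    have := hXb (i + 1) (by omega)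
    push_cast at *
    omega
  have hzero : ∀ l, cvWalk X (σ l) = 0 := by
    intro l
    rcases l with _ | l
    · rw [h0, cvWalk_zero']
    · have hlt := hm (Nat.lt_succ_self l)
      obtain ⟨i, hi⟩ : ∃ i, σ (l + 1) = i + 1 := ⟨σ (l + 1) - 1, by simp at hlt; omega⟩
      rw [hi, hS l i (by simp at hlt; omega) (by omega), hpre l i hi]
      ring
  have hcross : ∀ l, cvWalk X (σ (l + 1) - 1) * cvWalk X (σ (l + 1) + 1) < 0 := by
    intro l
    have hlt : σ l < σ (l + 1) := hm (Nat.lt_succ_self l)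
    obtain ⟨i, hi⟩ : ∃ i, σ (l + 1) = i + 1 := ⟨σ (l + 1) - 1, by omega⟩
    have hp := hpre l i hi
    have hne : i ≠ σ l := by
      intro h
      rw [h, (hA l).1] at hp
      omega
    obtain ⟨k, hk⟩ : ∃ k, i = k + 1 := ⟨i - 1, by omega⟩
    have hk1 : cvWalk Xb k = 2 * l := by
      have h1 := hle l k (by omega)
      rw [hk, cvWalk_succ'] at hp
      have := hXb (k + 1) (by omega)
      omega
    rw [hstart (l + 1), hi, hk, Nat.add_sub_cancel, hS l k (by omega) (by omega), hk1]
    have := hs2 l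
    rw [pow_succ]
    linarith
  have hnocross : ∀ l i, σ l < i → i < σ (l + 1) →
      0 ≤ cvWalk X (i - 1) * cvWalk X (i + 1) := by
    intro l i h1 h2
    obtain ⟨k, rfl⟩ : ∃ k, i = k + 1 := ⟨i - 1, by omega⟩
    rw [Nat.add_sub_cancel]
    by_cases hk : k = σ l
    · rw [hk, hzero, zero_mul]
    · obtain ⟨q, rfl⟩ : ∃ q, k = q + 1 := ⟨k - 1, by omega⟩
      rw [hS l q (by omega) (by omega), hS l (q + 1 + 1) (by omega) (by omega)]
      have e1 := hle l q (by omega)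
      have e2 := hle l (q + 1 + 1) (by omega)
      have e3 := mul_nonneg (sub_nonneg.2 e1) (sub_nonneg.2 e2)
      have := hs2 l
      calc (0 : ℤ) ≤ (2 * l + 1 - cvWalk Xb q) * (2 * l + 1 - cvWalk Xb (q + 1 + 1)) := e3
        _ = ((ε * (-1) ^ l) * (ε * (-1) ^ l)) *
            ((2 * l + 1 - cvWalk Xb q) * (2 * l + 1 - cvWalk Xb (q + 1 + 1))) := by
            rw [this, one_mul]
        _ = _ := by ring
  have hτ : ∀ l, cvTau X l = σ l := by
    intro l
    induction l with
    | zero => rw [h0]; rfl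
    | succ l ih =>
      rw [cvTau, ih]
      have hmem : σ (l + 1) ∈ {i : ℕ | σ l < i ∧ cvWalk X (i - 1) * cvWalk X (i + 1) < 0} :=
        ⟨hm (Nat.lt_succ_self l), hcross l⟩
      apply le_antisymm (Nat.sInf_le hmem)
      apply le_csInf ⟨_, hmem⟩
      rintro i ⟨hi1, hi2⟩
      by_contra h
      push Not at h
      have := hnocross l i hi1 h
      omega
  refine ⟨?_, hτ, ?_, ?_⟩
  · apply Set.infinite_of_injective_forall_mem (f := fun l => σ (l + 1))
    · intro a b hab
      have := hm.injective hab
      omega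
    · intro l
      have hlt : σ l < σ (l + 1) := hm (Nat.lt_succ_self l)
      exact ⟨by omega, hcross l⟩
  · intro n
    unfold cvSbar cvWalk
    apply Finset.sum_congr rfl
    intro j hj
    have hj1 : 1 ≤ j := (Finset.mem_Icc.1 hj).1
    obtain ⟨l, h1, h2⟩ := hloc (j - 1)
    unfold cvXbar
    simp only [hτ]
    rw [cv_sum_single σ hm (fun l => (-1 : ℤ) ^ (l + 1) * X 1 * X (j + 1)) j l
      (by omega) (by omega)]
    rw [hstep l j (by omega) (by omega), hX1]
    have := hs2 (l + 1)
    calc _ = ((ε * (-1) ^ (l + 1)) * (ε * (-1) ^ (l + 1))) * Xb j := by ring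
      _ = Xb j := by rw [this, one_mul]
  · intro n
    obtain ⟨l, h1, h2⟩ := hloc n
    have hSn := hS l n h1 h2.le
    have hn := hle l n h2
    have hX' : X (n + 1) = 1 ∨ X (n + 1) = -1 := by
      rcases Nat.eq_zero_or_pos n with h | h
      · rw [h]
        simpa [hX1] using hε
      · obtain ⟨k, h3, h4⟩ := hloc (n - 1)
        rw [hstep k n (by omega) (by omega)]
        rcases neg_one_pow_eq_or ℤ (k + 1) with a | a <;> rcases hε with b | b <;>
          rcases hXb n h with c | c <;> simp [a, b, c]
    rw [cvWalk_succ'] at hSn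
    have hsgn : ε * (-1) ^ l = 1 ∨ ε * (-1) ^ l = -1 := by
      rcases neg_one_pow_eq_or ℤ l with a | a <;> rcases hε with b | b <;> simp [a, b]
    have hlo : (2 * l : ℤ) ≤
        (Finset.range (n + 1)).sup' Finset.nonempty_range_add_one (cvWalk Xb) := by
      rw [← (hA l).1]
      exact Finset.le_sup' (cvWalk Xb) (Finset.mem_range.2 (by omega))
    have hhi : (Finset.range (n + 1)).sup' Finset.nonempty_range_add_one (cvWalk Xb)
        ≤ 2 * l + 1 := by
      apply Finset.sup'_le
      intro k hk
      exact hle l k (by have := Finset.mem_range.1 hk; omega)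
    unfold cvYof
    generalize (Finset.range (n + 1)).sup' Finset.nonempty_range_add_one (cvWalk Xb) = M at *
    rw [abs_le]
    rcases hsgn with h | h <;> rw [h] at hSn <;>
      rcases abs_cases (cvWalk X n) with ⟨a, b⟩ | ⟨a, b⟩ <;> rw [a] <;> omega
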